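/- For every γ = (a b; c d) ∈ SL₂(ℤ) and every τ ∈ ℍ one has F_{1−k,D}((aτ+b)/(cτ+d)) = (cτ+d)^{2−2k} · F_{1−k,D}(τ); that is, F_{1−k,D} is invariant under the weight 2−2k slash action of SL₂(ℤ). -/

import Mathlib

noncomputable section

open MeasureTheory

/-- The set of integral binary quadratic forms `[a,b,c]` of discriminant `D`. -/
def QD (D : ℤ) : Set (ℤ × ℤ × ℤ) := {q | q.2.1 ^ 2 - 4 * q.1 * q.2.2 = D}

/-- `Q(τ,1) = a τ² + b τ + c`. -/
def Qval (q : ℤ × ℤ × ℤ) (τ : ℂ) : ℂ :=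
  (q.1 : ℂ) * τ ^ 2 + (q.2.1 : ℂ) * τ + (q.2.2 : ℂ)

/-- `a|τ|² + b x + c` where `τ = x + iy`. -/
def Qell (q : ℤ × ℤ × ℤ) (τ : ℂ) : ℝ :=
  (q.1 : ℝ) * Complex.normSq τ + (q.2.1 : ℝ) * τ.re + (q.2.2 : ℝ)

/-- `ψ(v) = (1/2) ∫₀ᵛ u^(k-3/2) (1-u)^(-1/2) du`. -/
def psi (k : ℕ) (v : ℝ) : ℝ :=
  (1 / 2) * ∫ u in (0:ℝ)..v, u ^ ((k : ℝ) - 3 / 2) * (1 - u) ^ (-(1:ℝ) / 2)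

/-- real power of the integer `D`, as a complex number. -/
def Dpow (D : ℤ) (e : ℝ) : ℂ := (((D : ℝ) ^ e : ℝ) : ℂ)

/-- The summand of the series defining `F_{1-k,D}`. -/
def Fsummand (k : ℕ) (D : ℤ) (τ : ℂ) (q : ℤ × ℤ × ℤ) : ℂ :=
  ((Real.sign (Qell q τ) : ℝ) : ℂ) * Qval q τ ^ (k - 1) *
    ((psi k ((D : ℝ) * τ.im ^ 2 / Complex.normSq (Qval q τ)) : ℝ) : ℂ)

/-- `F_{1-k,D}`. -/
def F (k : ℕ) (D : ℤ) (τ : ℂ) : ℂ :=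
  (Dpow D (1 / 2 - (k : ℝ)) / (((Nat.choose (2 * k - 2) (k - 1) : ℝ) * Real.pi : ℝ) : ℂ)) *
    ∑' q : QD D, Fsummand k D τ (q : ℤ × ℤ × ℤ)

/-- `f_{k,D}`. -/
def fkD (k : ℕ) (D : ℤ) (τ : ℂ) : ℂ :=
  (Dpow D ((k : ℝ) - 1 / 2) / (((Nat.choose (2 * k - 2) (k - 1) : ℝ) * Real.pi : ℝ) : ℂ)) *
    ∑' q : QD D, Qval (q : ℤ × ℤ × ℤ) τ ^ (-(k : ℤ))

/-- Action of `SL₂(ℤ)` on binary quadratic forms: `(Q ∘ γ)(X,Y) = Q(pX+qY, rX+sY)`. -/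
def QAct (q : ℤ × ℤ × ℤ) (γ : Matrix.SpecialLinearGroup (Fin 2) ℤ) : ℤ × ℤ × ℤ :=
  (q.1 * (γ.1 0 0) ^ 2 + q.2.1 * (γ.1 0 0) * (γ.1 1 0) + q.2.2 * (γ.1 1 0) ^ 2,
   2 * q.1 * (γ.1 0 0) * (γ.1 0 1) + q.2.1 * ((γ.1 0 0) * (γ.1 1 1) + (γ.1 0 1) * (γ.1 1 0))
     + 2 * q.2.2 * (γ.1 1 0) * (γ.1 1 1),
   q.1 * (γ.1 0 1) ^ 2 + q.2.1 * (γ.1 0 1) * (γ.1 1 1) + q.2.2 * (γ.1 1 1) ^ 2)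

/-- A narrow class: an orbit of the `SL₂(ℤ)`-action on `QD D`. -/
def IsNarrowClass (D : ℤ) (𝒜 : Set (ℤ × ℤ × ℤ)) : Prop :=
  ∃ q₀ ∈ QD D, 𝒜 = {q | ∃ γ : Matrix.SpecialLinearGroup (Fin 2) ℤ, QAct q₀ γ = q}

/-- `F_{1-k,D,𝒜}`. -/
def FA (k : ℕ) (D : ℤ) (𝒜 : Set (ℤ × ℤ × ℤ)) (τ : ℂ) : ℂ :=
  ((-1 : ℂ) ^ k * Dpow D (1 / 2 - (k : ℝ)) /
      (((Nat.choose (2 * k - 2) (k - 1) : ℝ) * Real.pi : ℝ) : ℂ)) *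
    ∑' q : 𝒜, Fsummand k D τ (q : ℤ × ℤ × ℤ)

/-- `f_{k,D,𝒜}`. -/
def fA (k : ℕ) (D : ℤ) (𝒜 : Set (ℤ × ℤ × ℤ)) (τ : ℂ) : ℂ :=
  ((-1 : ℂ) ^ k * Dpow D ((k : ℝ) - 1 / 2) /
      (((Nat.choose (2 * k - 2) (k - 1) : ℝ) * Real.pi : ℝ) : ℂ)) *
    ∑' q : 𝒜, Qval (q : ℤ × ℤ × ℤ) τ ^ (-(k : ℤ))

/-- Partial derivative in the real direction `x`. -/
def dxx (G : ℂ → ℂ) (τ : ℂ) : ℂ :=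
  deriv (fun x : ℝ => G ((x : ℂ) + (τ.im : ℂ) * Complex.I)) τ.re

/-- Partial derivative in the imaginary direction `y`. -/
def dyy (G : ℂ → ℂ) (τ : ℂ) : ℂ :=
  deriv (fun y : ℝ => G ((τ.re : ℂ) + (y : ℂ) * Complex.I)) τ.im

/-- Wirtinger derivative `∂/∂τ̄ = (1/2)(∂/∂x + i ∂/∂y)`. -/
def wirDbar (G : ℂ → ℂ) (τ : ℂ) : ℂ := (dxx G τ + Complex.I * dyy G τ) / 2

/-- Wirtinger derivative `∂/∂τ = (1/2)(∂/∂x - i ∂/∂y)`. -/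
def wirD (G : ℂ → ℂ) (τ : ℂ) : ℂ := (dxx G τ - Complex.I * dyy G τ) / 2

/-- The operator `ξ_{2-2k}(G)(τ) = 2 i y^{2-2k} conj(∂G/∂τ̄)`. -/
def xiOp (k : ℕ) (G : ℂ → ℂ) (τ : ℂ) : ℂ :=
  2 * Complex.I * (τ.im : ℂ) ^ ((2 : ℤ) - 2 * (k : ℤ)) * (starRingEnd ℂ) (wirDbar G τ)

/-- The operator `𝒟 = (1/(2πi)) ∂/∂τ`. -/
def Dop (G : ℂ → ℂ) : ℂ → ℂ := fun τ => (1 / (2 * (Real.pi : ℂ) * Complex.I)) * wirD G τ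

/-- The weight `2-2k` hyperbolic Laplacian. -/
def DeltaOp (k : ℕ) (G : ℂ → ℂ) (τ : ℂ) : ℂ :=
  -(τ.im : ℂ) ^ 2 * (dxx (fun z => dxx G z) τ + dyy (fun z => dyy G z) τ)
    + Complex.I * ((2 : ℂ) - 2 * (k : ℂ)) * (τ.im : ℂ) * (dxx G τ + Complex.I * dyy G τ)

/-- `φ(v) = ∫₀ᵛ sin(u)^{2k-2} du`. -/
def phi (k : ℕ) (v : ℝ) : ℝ := ∫ u in (0:ℝ)..v, Real.sin u ^ (2 * k - 2)

/-- `φ̂(τ) = τ^{k-1} sgn(x) φ(arctan|y/x|)`, with value `0` when `x = 0`. -/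
def phiHat (k : ℕ) (τ : ℂ) : ℂ :=
  τ ^ (k - 1) * ((Real.sign τ.re : ℝ) : ℂ) *
    ((phi k (Real.arctan |τ.im / τ.re|) : ℝ) : ℂ)

/-- The non-holomorphic Eichler integral
`f^*(τ) = (2i)^{1-2k} ∫_{-τ̄}^{i∞} conj(f(-z̄)) (z+τ)^{2k-2} dz`,
parametrized along the vertical path `z = -τ̄ + it`, `t ∈ (0,∞)`. -/
def fstar (k : ℕ) (f : ℂ → ℂ) (τ : ℂ) : ℂ :=
  (2 * Complex.I) ^ ((1 : ℤ) - 2 * (k : ℤ)) * Complex.I *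
    ∫ t in Set.Ioi (0 : ℝ), (starRingEnd ℂ) (f (τ + (t : ℂ) * Complex.I)) *
      (((2 * τ.im + t : ℝ) : ℂ) * Complex.I) ^ (2 * k - 2)

/-- `a : ℕ → ℂ` is the sequence of Fourier coefficients of `f` (with `a n` the
coefficient of `e^{2πi(n+1)τ}`). -/
def HasFourier (a : ℕ → ℂ) (f : ℂ → ℂ) : Prop :=
  ∀ τ : ℂ, 0 < τ.im →
    f τ = ∑' n : ℕ, a n * Complex.exp (2 * (Real.pi : ℂ) * Complex.I * ((n : ℂ) + 1) * τ)

/-- The holomorphic Eichler integral `ℰ_f(τ) = ∑_{n≥1} (a_n/n^{2k-1}) e^{2πinτ}`. -/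
def EichlerE (k : ℕ) (a : ℕ → ℂ) (τ : ℂ) : ℂ :=
  ∑' n : ℕ, a n / ((n : ℂ) + 1) ^ (2 * k - 1) *
    Complex.exp (2 * (Real.pi : ℂ) * Complex.I * ((n : ℂ) + 1) * τ)

/-- `r_{a,b}(𝒜) = 1_{[Q_{a,b} ∈ 𝒜]} + (-1)^k 1_{[-Q_{a,b} ∈ 𝒜]}`. -/
def rab (k : ℕ) (D : ℤ) (𝒜 : Set (ℤ × ℤ × ℤ)) (a b : ℤ) : ℝ :=
  Set.indicator 𝒜 1 (a, b, (b ^ 2 - D) / (4 * a)) +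
    (-1 : ℝ) ^ k * Set.indicator 𝒜 1 (-a, -b, -((b ^ 2 - D) / (4 * a)))

/-- The constant `c_∞(𝒜)`. -/
def cInftyA (k : ℕ) (D : ℤ) (𝒜 : Set (ℤ × ℤ × ℤ)) : ℝ :=
  -(1 / (2 ^ (2 * k - 2) * (2 * (k : ℝ) - 1) * (Nat.choose (2 * k - 2) (k - 1) : ℝ))) *
    ∑' n : ℕ, (1 / ((n : ℝ) + 1) ^ k) *
      ∑ b ∈ Finset.range (2 * (n + 1)),
        if (4 * ((n : ℤ) + 1)) ∣ ((b : ℤ) ^ 2 - D) then rab k D 𝒜 ((n : ℤ) + 1) (b : ℤ) else 0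

/-- The constant `c_∞`. -/
def cInfty (k : ℕ) (D : ℤ) : ℝ :=
  -(1 / (2 ^ (2 * k - 3) * (2 * (k : ℝ) - 1) * (Nat.choose (2 * k - 2) (k - 1) : ℝ))) *
    ∑' n : ℕ, (1 / ((n : ℝ) + 1) ^ k) *
      (((Finset.range (2 * (n + 1))).filter
        (fun b : ℕ => (4 * ((n : ℤ) + 1)) ∣ ((b : ℤ) ^ 2 - D))).card : ℝ)

/-- The weight `2-2k` Hecke operator `T_p`. -/
def heckeT (k : ℕ) (p : ℕ) (g : ℂ → ℂ) (τ : ℂ) : ℂ :=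
  (p : ℂ) ^ ((1 : ℤ) - 2 * (k : ℤ)) * g ((p : ℂ) * τ) +
    (p : ℂ)⁻¹ * ∑ r ∈ Finset.range p, g ((τ + (r : ℂ)) / (p : ℂ))

open scoped Classical in
/-- The symbol `(D|p)`. -/
def legSym (D : ℤ) (p : ℕ) : ℤ :=
  if (p : ℤ) ∣ D then 0
  else if p = 2 then (if D % 8 = 1 ∨ D % 8 = 7 then 1 else -1)
  else if ∃ m : ℤ, (p : ℤ) ∣ (m ^ 2 - D) then 1 else -1

/-- Primitive forms of discriminant `D`. -/
def QDprim (D : ℤ) : Set (ℤ × ℤ × ℤ) :=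
  {q | q.2.1 ^ 2 - 4 * q.1 * q.2.2 = D ∧ Int.gcd q.1 (Int.gcd q.2.1 q.2.2) = 1}

/-- `F'_{1-k,D}`: the sum over primitive forms, with normalization `D^{(1-k)/2}`. -/
def Fprim (k : ℕ) (D : ℤ) (τ : ℂ) : ℂ :=
  (Dpow D ((1 - (k : ℝ)) / 2) / (((Nat.choose (2 * k - 2) (k - 1) : ℝ) * Real.pi : ℝ) : ℂ)) *
    ∑' q : QDprim D, Fsummand k D τ (q : ℤ × ℤ × ℤ)

/-- The root `η_Q = (-b+√D)/(2a)`. -/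
def etaQ (D : ℤ) (q : ℤ × ℤ × ℤ) : ℝ := (-(q.2.1 : ℝ) + Real.sqrt (D : ℝ)) / (2 * (q.1 : ℝ))

/-- The root `η'_Q = (-b-√D)/(2a)`. -/
def etaQ' (D : ℤ) (q : ℤ × ℤ × ℤ) : ℝ := (-(q.2.1 : ℝ) - Real.sqrt (D : ℝ)) / (2 * (q.1 : ℝ))

/-- The scaling matrix `A_Q`. -/
def AQ (D : ℤ) (q : ℤ × ℤ × ℤ) : Matrix (Fin 2) (Fin 2) ℝ :=
  (1 / Real.sqrt |etaQ D q - etaQ' D q|) •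
    !![1, -(etaQ' D q);
       -(Real.sign (etaQ D q - etaQ' D q)), Real.sign (etaQ D q - etaQ' D q) * etaQ D q]

/-- Real matrix associated to an element of `SL₂(ℤ)`. -/
def toR (γ : Matrix.SpecialLinearGroup (Fin 2) ℤ) : Matrix (Fin 2) (Fin 2) ℝ :=
  γ.1.map (fun n => (n : ℝ))

/-- Möbius action of a real `2×2` matrix on `ℂ`. -/
def moeb (g : Matrix (Fin 2) (Fin 2) ℝ) (τ : ℂ) : ℂ :=
  ((g 0 0 : ℝ) * τ + (g 0 1 : ℝ)) / ((g 1 0 : ℝ) * τ + (g 1 1 : ℝ))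

/-- Automorphy factor `j(g,τ) = cτ + d`. -/
def jfac (g : Matrix (Fin 2) (Fin 2) ℝ) (τ : ℂ) : ℂ :=
  ((g 1 0 : ℝ) : ℂ) * τ + ((g 1 1 : ℝ) : ℂ)

/-- `n`-th period `r_n(f) = ∫₀^∞ f(it) tⁿ dt`. -/
def periodR (f : ℂ → ℂ) (n : ℕ) : ℂ :=
  ∫ t in Set.Ioi (0 : ℝ), f ((t : ℂ) * Complex.I) * (t : ℂ) ^ n

/-- The even period polynomial `r⁺(f;X)`. -/
def rPlus (k : ℕ) (f : ℂ → ℂ) : Polynomial ℂ :=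
  ∑ m ∈ Finset.range k,
    Polynomial.C ((-1 : ℂ) ^ m * (Nat.choose (2 * k - 2) (2 * m) : ℂ) * periodR f (2 * m)) *
      Polynomial.X ^ (2 * k - 2 - 2 * m)

end

/-!
The series is a sum over forms, and a Möbius transformation of `τ` can be transferred to the forms:
`γ` permutes the forms of discriminant `D`, so only the individual summands have to be compared.

Both `Q(τ,1)` and `a|τ|² + bx + c` are values of one polar form `B_Q(z, w)`, at `w = τ` and at
`w = τ̄`, and `B_Q(γz, γw) = B_{Q∘γ}(z, w) / (j(γ,z) j(γ,w))`. Hence `Q(τ,1)` acquires the factor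
`j(γ,τ)⁻²`, and `a|τ|² + bx + c` the positive factor `|j(γ,τ)|⁻²`, which leaves its sign alone. As
the imaginary part also scales by `|j(γ,τ)|⁻²`, the argument `D y² / |Q(τ,1)|²` of `ψ` is invariant,
and `Q(τ,1)^{k-1}` alone produces the automorphy factor of weight `2 - 2k`.
-/

section

open UpperHalfPlane (num denom denom_ne_zero_of_im moebius_im)
open scoped MatrixGroups ComplexConjugate

theorem sign_div_of_pos (x : ℝ) {y : ℝ} (hy : 0 < y) : Real.sign (x / y) = Real.sign x := by
  simp only [Real.sign, div_lt_iff₀ hy, zero_mul, div_pos_iff_of_pos_right hy]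

theorem QAct_one (q : ℤ × ℤ × ℤ) : QAct q 1 = q := by
  simp [QAct]

theorem QAct_mul (q : ℤ × ℤ × ℤ) (γ δ : SL(2, ℤ)) : QAct q (γ * δ) = QAct (QAct q γ) δ := by
  simp only [QAct, Matrix.SpecialLinearGroup.coe_mul, Matrix.mul_apply, Fin.sum_univ_two]
  ext <;> ring

/-- The permutation of the integral binary quadratic forms given by the right action of `γ`. -/
def QActEquiv (γ : SL(2, ℤ)) : ℤ × ℤ × ℤ ≃ ℤ × ℤ × ℤ where
  toFun q := QAct q γ
  invFun q := QAct q γ⁻¹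
  left_inv q := by simp only [← QAct_mul, mul_inv_cancel, QAct_one]
  right_inv q := by simp only [← QAct_mul, inv_mul_cancel, QAct_one]

theorem discrim_QAct (q : ℤ × ℤ × ℤ) (γ : SL(2, ℤ)) :
    discrim (QAct q γ).1 (QAct q γ).2.1 (QAct q γ).2.2 = discrim q.1 q.2.1 q.2.2 := by
  calc
    _ = (γ.1 0 0 * γ.1 1 1 - γ.1 0 1 * γ.1 1 0) ^ 2 * discrim q.1 q.2.1 q.2.2 := by
      simp only [QAct, discrim]
      ring
    _ = _ := by rw [← Matrix.det_fin_two, γ.det_coe, one_pow, one_mul]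

theorem QAct_mem_QD_iff {D : ℤ} (q : ℤ × ℤ × ℤ) (γ : SL(2, ℤ)) : QAct q γ ∈ QD D ↔ q ∈ QD D :=
  Iff.of_eq (congrArg (· = D) (discrim_QAct q γ))

/-- The polarization `a z w + b (z + w) / 2 + c` of the polynomial `Q(z,1)`. Its restrictions to the
diagonal and to `w = z̄` are `Qval` and `Qell`, so that both transform by the same rule. -/
noncomputable def Qpolar (q : ℤ × ℤ × ℤ) (z w : ℂ) : ℂ :=
  q.1 * (z * w) + q.2.1 * ((z + w) / 2) + q.2.2

theorem Qpolar_self (q : ℤ × ℤ × ℤ) (z : ℂ) : Qpolar q z z = Qval q z := by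
  simp only [Qpolar, Qval]
  ring

theorem Qpolar_conj (q : ℤ × ℤ × ℤ) (z : ℂ) : Qpolar q z (conj z) = Qell q z := by
  simp only [Qpolar, Qell, Complex.mul_conj, ← Complex.re_eq_add_conj]
  push_cast
  rfl

section Moebius

variable (q : ℤ × ℤ × ℤ) (γ : SL(2, ℤ)) {z w : ℂ}

theorem Qpolar_moebius (hz : denom γ z ≠ 0) (hw : denom γ w ≠ 0) :
    Qpolar q (num γ z / denom γ z) (num γ w / denom γ w) =
      Qpolar (QAct q γ) z w / (denom γ z * denom γ w) := by
  have homogeneous : Qpolar (QAct q γ) z w = q.1 * (num γ z * num γ w) +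
      q.2.1 * ((num γ z * denom γ w + num γ w * denom γ z) / 2) +
      q.2.2 * (denom γ z * denom γ w) := by
    simp only [Qpolar, QAct, num, denom, Matrix.SpecialLinearGroup.coe_GL_coe_matrix,
      Matrix.SpecialLinearGroup.map_apply_coe, RingHom.mapMatrix_apply, Int.coe_castRingHom,
      Matrix.map_apply, Complex.ofReal_intCast]
    push_cast
    ring
  rw [homogeneous, Qpolar]
  field_simp

theorem Qval_moebius (hz : denom γ z ≠ 0) :
    Qval q (num γ z / denom γ z) = Qval (QAct q γ) z / denom γ z ^ 2 := by
  rw [← Qpolar_self, ← Qpolar_self, Qpolar_moebius q γ hz hz, sq]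

theorem Qell_moebius (hz : denom γ z ≠ 0) :
    Qell q (num γ z / denom γ z) = Qell (QAct q γ) z / Complex.normSq (denom γ z) := by
  have hnum : conj (num γ z) = num γ (conj z) := by simp [num]
  have hdenom : conj (denom γ z) = denom γ (conj z) := by simp [denom]
  have hz' : denom γ (conj z) ≠ 0 := hdenom ▸ (map_ne_zero _).mpr hz
  apply Complex.ofReal_injective
  rw [← Qpolar_conj, map_div₀, hnum, hdenom, Qpolar_moebius q γ hz hz', ← hdenom, Complex.mul_conj,
    Qpolar_conj, Complex.ofReal_div]

theorem sign_Qell_moebius (hz : denom γ z ≠ 0) :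
    Real.sign (Qell q (num γ z / denom γ z)) = Real.sign (Qell (QAct q γ) z) := by
  rw [Qell_moebius q γ hz, sign_div_of_pos _ (Complex.normSq_pos.mpr hz)]

theorem im_sq_div_normSq_Qval_moebius (hz : denom γ z ≠ 0) :
    (num γ z / denom γ z).im ^ 2 / Complex.normSq (Qval q (num γ z / denom γ z)) =
      z.im ^ 2 / Complex.normSq (Qval (QAct q γ) z) := by
  have hj : Complex.normSq (denom γ z) ≠ 0 := Complex.normSq_eq_zero.not.mpr hz
  have him : (num γ z / denom γ z).im = z.im / Complex.normSq (denom γ z) := by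
    simp [moebius_im]
  rw [him, Qval_moebius q γ hz, map_div₀, map_pow, div_pow,
    div_div_div_cancel_right₀ (pow_ne_zero 2 hj)]

theorem Fsummand_moebius {k : ℕ} (hk : 1 ≤ k) (D : ℤ) (hz : denom γ z ≠ 0) :
    Fsummand k D (num γ z / denom γ z) q =
      denom γ z ^ ((2 : ℤ) - 2 * (k : ℤ)) * Fsummand k D z (QAct q γ) := by
  have weight : denom γ z ^ ((2 : ℤ) - 2 * (k : ℤ)) = ((denom γ z ^ 2) ^ (k - 1))⁻¹ := by
    rw [← pow_mul, ← zpow_natCast, ← zpow_neg]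
    congr 1
    lia
  simp only [Fsummand, mul_div_assoc]
  rw [sign_Qell_moebius q γ hz, im_sq_div_normSq_Qval_moebius q γ hz, Qval_moebius q γ hz, div_pow,
    weight]
  ring

end Moebius

-- A divergent `tsum` is `0`, which reindexing and scaling preserve as well: no convergence argument
-- is involved.
theorem tsum_Fsummand_moebius {k : ℕ} (hk : 1 ≤ k) (D : ℤ) {S : Set (ℤ × ℤ × ℤ)} (γ : SL(2, ℤ))
    (hS : ∀ q, QAct q γ ∈ S ↔ q ∈ S) {z : ℂ} (hz : denom γ z ≠ 0) :
    ∑' q : S, Fsummand k D (num γ z / denom γ z) q =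
      denom γ z ^ ((2 : ℤ) - 2 * (k : ℤ)) * ∑' q : S, Fsummand k D z q := by
  calc
    _ = ∑' q : S, denom γ z ^ ((2 : ℤ) - 2 * (k : ℤ)) * Fsummand k D z (QAct q γ) :=
      tsum_congr fun q ↦ Fsummand_moebius q γ hk D hz
    _ = denom γ z ^ ((2 : ℤ) - 2 * (k : ℤ)) * ∑' q : S, Fsummand k D z (QAct q γ) := tsum_mul_left
    _ = _ := by
      congr 1
      exact ((QActEquiv γ).subtypeEquiv fun q ↦ (hS q).symm).tsum_eq fun q : S ↦ Fsummand k D z q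

theorem stmt18_general {k : ℕ} (hk : 2 ≤ k) {D : ℤ} (hD : 0 < D) (γ : SL(2, ℤ)) {τ : ℂ}
    (hτ : τ.im ≠ 0) :
    F k D (num γ τ / denom γ τ) = denom γ τ ^ ((2 : ℤ) - 2 * (k : ℤ)) * F k D τ := by
  have hj : denom γ τ ≠ 0 := denom_ne_zero_of_im γ hτ
  rw [F, F, tsum_Fsummand_moebius (by lia) D γ (fun q ↦ QAct_mem_QD_iff q γ) hj, mul_left_comm]

end

theorem stmt18 (k : ℕ) (hk : 2 ≤ k) (D : ℤ) (hD : 0 < D)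
    (hD4 : D % 4 = 0 ∨ D % 4 = 1) (hDsq : ¬∃ m : ℤ, m ^ 2 = D)
    (γ : Matrix.SpecialLinearGroup (Fin 2) ℤ) (τ : ℂ) (hτ : 0 < τ.im) :
    F k D ((((γ.1 0 0 : ℤ) : ℂ) * τ + ((γ.1 0 1 : ℤ) : ℂ)) /
        (((γ.1 1 0 : ℤ) : ℂ) * τ + ((γ.1 1 1 : ℤ) : ℂ))) =
      (((γ.1 1 0 : ℤ) : ℂ) * τ + ((γ.1 1 1 : ℤ) : ℂ)) ^ ((2 : ℤ) - 2 * (k : ℤ)) * F k D τ := by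
  simpa [UpperHalfPlane.num, UpperHalfPlane.denom] using stmt18_general hk hD γ hτ.ne'
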